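/- arXiv:2204.02628 — 2 statements merged into one kernel-verified Lean document; each statement's English description precedes it below -/
import Mathlib

section
/- Let M ≥ 2 be an integer, f : ℤ → ℂ a function with f(n+M) = f(n) for all n ∈ ℤ, ν ∈ {0,1}, and n ≥ 0 an integer with (n,ν) ≠ (0,0). Then (−1)^(n+1) · (M^(2n+ν)/(2n+ν+1)) · ∑_{m=1}^{M} f(m) · B_{2n+ν+1}(m/M) = (−1)^ν · (M/(2π))^(2n+ν+1) · ((2n+ν)!/√M) · ∑_{k=1}^∞ G_f^{(ν)}(k)/k^(2n+ν+1), where the series on the right converges absolutely. -/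
/-- The Fourier coefficient `G_f^{(ν)}(k)` of a function `f : ℤ → ℂ` of period `M`. -/
noncomputable def GfC (M : ℕ) (f : ℤ → ℂ) (ν : ℕ) (k : ℕ) : ℂ :=
  if ν = 0 then
    (2 / (Real.sqrt M : ℂ)) *
      ∑ m ∈ Finset.range M, f m * (Real.sin (2 * Real.pi * m * k / M) : ℂ)
  else
    (2 / (Real.sqrt M : ℂ)) *
      ∑ m ∈ Finset.range M, f m * (Real.cos (2 * Real.pi * m * k / M) : ℂ)

/-!
On `[0, 1]` the Bernoulli polynomial `B_s`, `s ≥ 2`, is a multiple of the absolutely convergent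
series `∑ sin (2πkx) / k ^ s` (`s` odd) or `∑ cos (2πkx) / k ^ s` (`s` even). Evaluating at
`x = m / M`, weighting by `f m` and summing over a period turns the `k`-th numerator into
`G_f^{(ν)}(k)`. The values `B_s(0)` and `B_s(1)` agree because `s ≠ 1`, so it does not matter
whether the period is `0, …, M - 1` or `1, …, M`.
-/

open Finset Real
open scoped Nat

theorem sum_Icc_one_eq_sum_range {A : Type*} [AddCommMonoid A] (F : ℕ → A) {M : ℕ}
    (hF : F M = F 0) : ∑ m ∈ Icc 1 M, F m = ∑ m ∈ range M, F m := by
  rcases M.eq_zero_or_pos with rfl | hM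
  · rfl
  · rw [← Ico_add_one_right_eq_Icc, sum_Ico_succ_top hM, hF, sum_range_eq_add_Ico F hM, add_comm]

theorem bernoulliFun_ratCast (s : ℕ) (q : ℚ) :
    bernoulliFun s q = ((Polynomial.bernoulli s).eval q : ℚ) := by
  rw [bernoulliFun, ← eq_ratCast (algebraMap ℚ ℝ) q, Polynomial.eval_map_apply, eq_ratCast]

theorem sum_Icc_mul_bernoulli_eq_sum_range_mul_bernoulliFun {M : ℕ} (hM : M ≠ 0) {f : ℤ → ℂ}
    (hf : f M = f 0) {s : ℕ} (hs : s ≠ 1) :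
    ∑ m ∈ Icc 1 M, f m * (((Polynomial.bernoulli s).eval ((m : ℚ) / (M : ℚ)) : ℚ) : ℂ) =
      ∑ m ∈ range M, f m * (bernoulliFun s (m / M) : ℂ) := by
  have eval_eq (m : ℕ) : (((Polynomial.bernoulli s).eval ((m : ℚ) / (M : ℚ)) : ℚ) : ℂ) =
      (bernoulliFun s (m / M) : ℂ) := by
    rw [← Complex.ofReal_ratCast, ← bernoulliFun_ratCast, Rat.cast_div, Rat.cast_natCast,
      Rat.cast_natCast]
  simp only [eval_eq]
  refine sum_Icc_one_eq_sum_range (fun m : ℕ ↦ f m * (bernoulliFun s (m / M) : ℂ)) ?_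
  simp only [Nat.cast_zero, zero_div, div_self (Nat.cast_ne_zero.mpr hM : (M : ℝ) ≠ 0),
    bernoulliFun_endpoints_eq_of_ne_one hs, hf]

/-- The trigonometric function occurring in `G_f^{(ν)}`: the sine for `ν = 0` and the cosine for
`ν = 1` (and, as in `GfC`, for every other `ν`). -/
noncomputable def trigKernel (ν : ℕ) : ℝ → ℝ := if ν = 0 then sin else cos

theorem GfC_eq_sum_trigKernel (M : ℕ) (f : ℤ → ℂ) (ν k : ℕ) :
    GfC M f ν k =
      2 / (√M : ℂ) * ∑ m ∈ range M, f m * (trigKernel ν (2 * π * k * (m / M)) : ℂ) := by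
  have angle_eq (m : ℕ) : 2 * π * m * k / M = 2 * π * k * (m / M) := by ring
  simp only [GfC, trigKernel, angle_eq]
  split_ifs <;> rfl

/-- The constant `c` in the Fourier expansion
`∑_{k ≥ 1} trigKernel ν (2πkx) / k ^ (2n + ν + 1) = c * B_{2n + ν + 1}(x)` on `[0, 1]`. -/
noncomputable def bernoulliTrigConst (ν n : ℕ) : ℝ :=
  (-1) ^ (n + 1 + ν) * (2 * π) ^ (2 * n + ν + 1) / 2 / (2 * n + ν + 1)!

section Expansion

variable {ν n : ℕ}

theorem hasSum_one_div_pow_mul_trigKernel (hν : ν = 0 ∨ ν = 1) (hn : ¬(n = 0 ∧ ν = 0)) {x : ℝ}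
    (hx : x ∈ Set.Icc (0 : ℝ) 1) :
    HasSum (fun k : ℕ ↦ 1 / (k : ℝ) ^ (2 * n + ν + 1) * trigKernel ν (2 * π * k * x))
      (bernoulliTrigConst ν n * bernoulliFun (2 * n + ν + 1) x) := by
  rcases hν with rfl | rfl
  · exact hasSum_one_div_nat_pow_mul_sin (fun h ↦ hn ⟨h, rfl⟩) hx
  · exact hasSum_one_div_nat_pow_mul_cos n.succ_ne_zero hx

theorem hasSum_trigKernel_div_succ_pow (hν : ν = 0 ∨ ν = 1) (hn : ¬(n = 0 ∧ ν = 0)) {x : ℝ}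
    (hx : x ∈ Set.Icc (0 : ℝ) 1) :
    HasSum (fun k : ℕ ↦ trigKernel ν (2 * π * (k + 1 : ℕ) * x) / (k + 1 : ℝ) ^ (2 * n + ν + 1))
      (bernoulliTrigConst ν n * bernoulliFun (2 * n + ν + 1) x) := by
  have shifted := (hasSum_nat_add_iff' 1).mpr (hasSum_one_div_pow_mul_trigKernel hν hn hx)
  simpa [div_eq_inv_mul] using shifted

theorem hasSum_sum_mul_trigKernel_div_succ_pow (hν : ν = 0 ∨ ν = 1) (hn : ¬(n = 0 ∧ ν = 0))
    {ι : Type*} (S : Finset ι) (w : ι → ℂ) {x : ι → ℝ} (hx : ∀ i ∈ S, x i ∈ Set.Icc (0 : ℝ) 1) :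
    HasSum
      (fun k : ℕ ↦ (∑ i ∈ S, w i * (trigKernel ν (2 * π * (k + 1 : ℕ) * x i) : ℂ)) /
        (k + 1 : ℂ) ^ (2 * n + ν + 1))
      (bernoulliTrigConst ν n * ∑ i ∈ S, w i * (bernoulliFun (2 * n + ν + 1) (x i) : ℂ)) := by
  have weighted := hasSum_sum fun i hi ↦
    (Complex.hasSum_ofReal.mpr (hasSum_trigKernel_div_succ_pow hν hn (hx i hi))).mul_left (w i)
  simpa only [Complex.ofReal_div, Complex.ofReal_pow, Complex.ofReal_add, Complex.ofReal_natCast,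
    Complex.ofReal_one, Complex.ofReal_mul, ← mul_div_assoc, ← sum_div, mul_left_comm (w _),
    ← mul_sum] using weighted

theorem hasSum_GfC_div_succ_pow (hν : ν = 0 ∨ ν = 1) (hn : ¬(n = 0 ∧ ν = 0)) (M : ℕ)
    (f : ℤ → ℂ) :
    HasSum (fun k : ℕ ↦ GfC M f ν (k + 1) / ((k : ℂ) + 1) ^ (2 * n + ν + 1))
      (2 / (√M : ℂ) * (bernoulliTrigConst ν n *
        ∑ m ∈ range M, f m * (bernoulliFun (2 * n + ν + 1) (m / M) : ℂ))) := by
  have div_mem_Icc : ∀ m ∈ range M, (m / M : ℝ) ∈ Set.Icc (0 : ℝ) 1 := fun m hm ↦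
    ⟨by positivity, div_le_one_of_le₀ (mod_cast (mem_range.mp hm).le) M.cast_nonneg⟩
  simpa only [GfC_eq_sum_trigKernel, mul_div_assoc] using
    (hasSum_sum_mul_trigKernel_div_succ_pow hν hn (range M) (fun m ↦ f m) div_mem_Icc).mul_left
      (2 / (√M : ℂ))

end Expansion

theorem fourier_prefactor_mul_bernoulliTrigConst {M : ℕ} (hM : M ≠ 0) (ν n : ℕ) :
    (-1) ^ ν * ((M : ℂ) / (2 * π)) ^ (2 * n + ν + 1) * ((2 * n + ν)! / (√M : ℂ)) *
        (2 / (√M : ℂ) * bernoulliTrigConst ν n) =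
      (-1) ^ (n + 1) * ((M : ℂ) ^ (2 * n + ν) / (2 * n + ν + 1)) := by
  have sqrt_mul_sqrt : (√M : ℂ) * √M = M := mod_cast mul_self_sqrt M.cast_nonneg
  have sign_mul_sign : (-1 : ℂ) ^ ν * (-1) ^ ν = 1 := by rw [← mul_pow]; simp
  have two_pi_ne_zero : (2 * π : ℂ) ≠ 0 := mod_cast two_pi_pos.ne'
  have pow_mul_pow : ((M : ℂ) / (2 * π)) ^ (2 * n + ν + 1) * (2 * π : ℂ) ^ (2 * n + ν + 1) =
      (M : ℂ) ^ (2 * n + ν) * M := by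
    rw [← mul_pow, div_mul_cancel₀ _ two_pi_ne_zero, pow_succ]
  have M_ne_zero : (M : ℂ) ≠ 0 := Nat.cast_ne_zero.mpr hM
  have factorial_ne_zero : ((2 * n + ν)! : ℂ) ≠ 0 := mod_cast (2 * n + ν).factorial_ne_zero
  have succ_ne_zero : (2 * n + ν + 1 : ℂ) ≠ 0 := mod_cast (2 * n + ν).succ_ne_zero
  calc
    _ = ((-1 : ℂ) ^ ν * (-1) ^ ν) * (-1) ^ (n + 1) *
          (((M : ℂ) / (2 * π)) ^ (2 * n + ν + 1) * (2 * π : ℂ) ^ (2 * n + ν + 1)) / (√M * √M) *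
          ((2 * n + ν)! / ((2 * n + ν + 1) * (2 * n + ν)!)) := by
      simp only [bernoulliTrigConst, Nat.factorial_succ]
      push_cast
      ring
    _ = _ := by
      rw [sign_mul_sign, pow_mul_pow, sqrt_mul_sqrt]
      field_simp

/-- For a periodic `f : ℤ → ℂ` of period `M ≥ 2`, `ν ∈ {0,1}` and
`n ≥ 0` with `(n,ν) ≠ (0,0)`,
`(−1)^(n+1) (M^(2n+ν)/(2n+ν+1)) ∑_{m=1}^M f(m) B_{2n+ν+1}(m/M)
  = (−1)^ν (M/(2π))^(2n+ν+1) ((2n+ν)!/√M) ∑_{k≥1} G_f^{(ν)}(k)/k^(2n+ν+1)`,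
where the series on the right converges absolutely. -/
theorem Lvalue_fourier_expansion (M : ℕ) (hM : 2 ≤ M) (f : ℤ → ℂ)
    (hf : ∀ n : ℤ, f (n + M) = f n) (ν : ℕ) (hν : ν = 0 ∨ ν = 1)
    (n : ℕ) (hn : ¬(n = 0 ∧ ν = 0)) :
    (Summable fun k : ℕ => ‖GfC M f ν (k + 1) / ((k : ℂ) + 1) ^ (2 * n + ν + 1)‖) ∧
    (-1) ^ (n + 1) * ((M : ℂ) ^ (2 * n + ν) / (2 * n + ν + 1)) *
        ∑ m ∈ Finset.Icc 1 M,
          f (m : ℤ) *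
            (((Polynomial.bernoulli (2 * n + ν + 1)).eval ((m : ℚ) / (M : ℚ)) : ℚ) : ℂ)
      = (-1) ^ ν * ((M : ℂ) / (2 * (Real.pi : ℂ))) ^ (2 * n + ν + 1) *
          (((2 * n + ν).factorial : ℂ) / (Real.sqrt M : ℂ)) *
          ∑' k : ℕ, GfC M f ν (k + 1) / ((k : ℂ) + 1) ^ (2 * n + ν + 1) := by
  have hM₀ : M ≠ 0 := by lia
  have f_period : f M = f 0 := by simpa only [zero_add] using hf 0
  have expansion := hasSum_GfC_div_succ_pow hν hn M f
  refine ⟨expansion.summable.norm, ?_⟩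
  rw [expansion.tsum_eq,
    sum_Icc_mul_bernoulli_eq_sum_range_mul_bernoulliFun hM₀ f_period (by lia),
    ← fourier_prefactor_mul_bernoulliTrigConst hM₀]
  ring
end

section
/- Fix an integer k ≥ 1 and apply the construction in the context with f = χ_k, M = 4k+2, ν = 0, a = k², and b = 2k+1, obtaining the sequence ξ(n). Then ξ(n) > 0 for every integer n ≥ 0. -/
/-- The Fourier coefficient `G_f^{(ν)}(k)` of a function `f : ℤ → ℝ` of period `M`. -/
noncomputable def Gf (M : ℕ) (f : ℤ → ℝ) (ν : ℕ) (k : ℕ) : ℝ :=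
  if ν = 0 then
    (2 / Real.sqrt M) * ∑ m ∈ Finset.range M, f m * Real.sin (2 * Real.pi * m * k / M)
  else
    (2 / Real.sqrt M) * ∑ m ∈ Finset.range M, f m * Real.cos (2 * Real.pi * m * k / M)

/-- `C_n = (−1)^(n+1) (M^(2n+ν)/(2n+ν+1)) ∑_{m=1}^M f(m) B_{2n+ν+1}(m/M)`. -/
noncomputable def Cf (M : ℕ) (f : ℤ → ℝ) (ν : ℕ) (n : ℕ) : ℝ :=
  (-1) ^ (n + 1) * ((M : ℝ) ^ (2 * n + ν) / (2 * n + ν + 1)) *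
    ∑ m ∈ Finset.Icc 1 M,
      f m * (((Polynomial.bernoulli (2 * n + ν + 1)).eval ((m : ℚ) / (M : ℚ)) : ℚ) : ℝ)

/-- `D_n = b^(−n) ∑_{k=0}^n C(n,k) a^(n−k) C_k`. -/
noncomputable def Df (M : ℕ) (f : ℤ → ℝ) (ν a b : ℕ) (n : ℕ) : ℝ :=
  ((b : ℝ) ^ n)⁻¹ *
    ∑ k ∈ Finset.range (n + 1), (n.choose k : ℝ) * (a : ℝ) ^ (n - k) * Cf M f ν k

/-- The unsigned Stirling number of the first kind `s(n,j)`: the coefficient of `X^j`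
in `X (X+1) (X+2) ⋯ (X+n−1)`. -/
noncomputable def stirling1 (n j : ℕ) : ℝ :=
  (∏ i ∈ Finset.range n, (Polynomial.X + Polynomial.C (i : ℝ))).coeff j

/-- `ξ(0) = D_0` and `ξ(n) = (1/n!) ∑_{m=0}^{n−1} s(n, n−m) D_{n−m}` for `n ≥ 1`. -/
noncomputable def xif (M : ℕ) (f : ℤ → ℝ) (ν a b : ℕ) : ℕ → ℝ
  | 0 => Df M f ν a b 0
  | n + 1 => (1 / ((n + 1).factorial : ℝ)) *
      ∑ m ∈ Finset.range (n + 1), stirling1 (n + 1) (n + 1 - m) * Df M f ν a b (n + 1 - m)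

/-- The odd periodic function `χ_k` of period `4k+2` with `χ_k(n) = 1` for
`n ≡ k, k+1 (mod 4k+2)`, `χ_k(n) = −1` for `n ≡ −k, −k−1 (mod 4k+2)`, and `0` otherwise. -/
noncomputable def chiK (k : ℕ) (n : ℤ) : ℝ :=
  if n % (4 * k + 2) = (k : ℤ) % (4 * k + 2) ∨
      n % (4 * k + 2) = ((k : ℤ) + 1) % (4 * k + 2) then 1
  else if n % (4 * k + 2) = (-(k : ℤ)) % (4 * k + 2) ∨
      n % (4 * k + 2) = (-(k : ℤ) - 1) % (4 * k + 2) then -1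
  else 0

/-!
The second derivative of `B_{2n+3}` is `(2n+3)(2n+2) B_{2n+1}`, and the Bernoulli polynomials of odd
degree at least `3` vanish at `0` and `1/2`, so concavity shows by induction that
`(-1)^(n+1) B_{2n+1}` is positive on `(0, 1/2)`. Under the reflection `m ↦ M - m`, both
`B_{2n+1}(m/M)` and an odd function `f` of period `M` change sign. So if `f ≥ 0` on `(0, M/2)`,
every term `f(m) · (-1)^(n+1) B_{2n+1}(m/M)` of `C_n` is nonnegative, and `C_n > 0` once `f` is
positive somewhere on `(0, M/2)`. Passing from `C_n` to `D_n` and from `D_n` to `ξ(n)` involves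
only nonnegative weights.
-/

theorem stirling1_eq_stirlingFirst (n j : ℕ) : stirling1 n j = Nat.stirlingFirst n j := by
  unfold stirling1
  induction n generalizing j with
  | zero => cases j <;> simp [Polynomial.coeff_one]
  | succ n ih =>
    rw [Finset.prod_range_succ, mul_add, Polynomial.coeff_add, Polynomial.coeff_mul_C, ih]
    cases j with
    | zero => cases n <;> simp
    | succ j =>
      rw [Polynomial.coeff_mul_X, ih, Nat.stirlingFirst_succ_succ]
      push_cast
      ring

theorem Df_pos_of_Cf_pos {M : ℕ} {f : ℤ → ℝ} {ν a b : ℕ} (hb : 0 < b)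
    (hC : ∀ n, 0 < Cf M f ν n) (n : ℕ) : 0 < Df M f ν a b n := by
  refine mul_pos (by positivity) (Finset.sum_pos' (fun i _ ↦ ?_) ⟨n, by simp, ?_⟩)
  · exact mul_nonneg (by positivity) (hC i).le
  · simpa using hC n

theorem xif_pos_of_Df_pos {M : ℕ} {f : ℤ → ℝ} {ν a b : ℕ} (hD : ∀ n, 0 < Df M f ν a b n) :
    ∀ n, 0 < xif M f ν a b n
  | 0 => hD 0
  | n + 1 => by
    simp only [xif, stirling1_eq_stirlingFirst]
    refine mul_pos (by positivity) (Finset.sum_pos' (fun m _ ↦ ?_) ⟨0, by simp, ?_⟩)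
    · exact mul_nonneg (Nat.cast_nonneg _) (hD _).le
    · simpa [Nat.stirlingFirst_self] using hD (n + 1)

theorem cast_eval_bernoulli (j : ℕ) (q : ℚ) :
    (((Polynomial.bernoulli j).eval q : ℚ) : ℝ) = bernoulliFun j q :=
  (Polynomial.eval_map_apply (algebraMap ℚ ℝ) q).symm

theorem deriv_deriv_bernoulliFun (j : ℕ) :
    deriv (deriv (bernoulliFun (j + 2))) = fun x ↦ (j + 2) * ((j + 1) * bernoulliFun j x) := by
  ext x
  simp [deriv_bernoulliFun]

theorem bernoulliFun_odd_eval_zero {j : ℕ} (hj : Odd j) (hj1 : 1 < j) : bernoulliFun j 0 = 0 := by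
  rw [bernoulliFun_eval_zero, bernoulli_eq_zero_of_odd hj hj1, Rat.cast_zero]

theorem pos_of_strictConcaveOn_of_eq_zero {g : ℝ → ℝ} {a b x : ℝ}
    (hg : StrictConcaveOn ℝ (Set.Icc a b) g) (ha : g a = 0) (hb : g b = 0)
    (hx : x ∈ Set.Ioo a b) : 0 < g x := by
  have hab : a < b := hx.1.trans hx.2
  have hmin : min (g a) (g b) < g x :=
    hg.lt_on_openSegment (Set.left_mem_Icc.2 hab.le) (Set.right_mem_Icc.2 hab.le) hab.ne
      (by rwa [openSegment_eq_Ioo hab])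
  simpa [ha, hb] using hmin

theorem neg_one_pow_mul_bernoulliFun_odd_pos (n : ℕ) {x : ℝ} (hx : x ∈ Set.Ioo 0 2⁻¹) :
    0 < (-1) ^ (n + 1) * bernoulliFun (2 * n + 1) x := by
  induction n generalizing x with
  | zero => simpa [bernoulliFun_one] using hx.2
  | succ n ih =>
    let g : ℝ → ℝ := fun y ↦ (-1) ^ (n + 2) * bernoulliFun (2 * n + 1 + 2) y
    have hg_deriv2 (y : ℝ) : deriv^[2] g y =
        -((2 * n + 3) * (2 * n + 2) * ((-1) ^ (n + 1) * bernoulliFun (2 * n + 1) y)) := by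
      simp only [g, Function.iterate_succ, Function.iterate_zero, Function.comp_apply, id,
        deriv_const_mul_field', deriv_const_mul_field, deriv_deriv_bernoulliFun]
      push_cast
      ring
    have hg_concave : StrictConcaveOn ℝ (Set.Icc 0 2⁻¹) g := by
      refine strictConcaveOn_of_deriv2_neg (convex_Icc _ _)
        ((continuous_bernoulliFun _).const_mul _).continuousOn fun y hy ↦ ?_
      rw [interior_Icc] at hy
      rw [hg_deriv2, neg_lt_zero]
      exact mul_pos (by positivity) (ih hy)
    have hg_zero : g 0 = 0 := by
      simp only [g, bernoulliFun_odd_eval_zero (j := 2 * n + 1 + 2) ⟨n + 1, by ring⟩ (by lia),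
        mul_zero]
    have hg_half : g 2⁻¹ = 0 := by
      simp only [g, show 2 * n + 1 + 2 = 2 * (n + 1) + 1 by ring, bernoulliFun_eval_half_eq_zero,
        mul_zero]
    exact pos_of_strictConcaveOn_of_eq_zero (g := g) hg_concave hg_zero hg_half hx

theorem Cf_zero_eq_sum_bernoulliFun (M : ℕ) (f : ℤ → ℝ) (n : ℕ) :
    Cf M f 0 n = (M : ℝ) ^ (2 * n) / (2 * n + 1) *
      ∑ m ∈ Finset.Icc 1 M, f m * ((-1) ^ (n + 1) * bernoulliFun (2 * n + 1) (m / M)) := by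
  simp only [Cf, cast_eval_bernoulli, mul_left_comm (f _), ← Finset.mul_sum]
  push_cast
  ring

theorem div_mem_Ioo_zero_half {m M : ℝ} (hm : 0 < m) (hmM : 2 * m < M) :
    m / M ∈ Set.Ioo (0 : ℝ) 2⁻¹ := by
  have hM : 0 < M := by linarith
  refine ⟨div_pos hm hM, ?_⟩
  rw [div_lt_iff₀ hM]
  linarith

section OddPeriodic

variable {M : ℕ} {f : ℤ → ℝ}

theorem bernoulliFun_odd_term_reflect (hodd : f.Odd) (hper : f.Periodic M) (hM : M ≠ 0)
    (n : ℕ) (m : ℤ) :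
    f (M - m) * bernoulliFun (2 * n + 1) ((M - m : ℤ) / M) =
      f m * bernoulliFun (2 * n + 1) (m / M) := by
  have hf : f (M - m) = -f m := by rw [hper.sub_eq', hodd]
  have harg : (((M - m : ℤ) : ℝ) / M) = 1 - m / M := by
    push_cast
    field_simp
  rw [hf, harg, bernoulliFun_eval_one_sub, Odd.neg_one_pow ⟨n, rfl⟩]
  ring

theorem bernoulliFun_odd_term_nonneg (hodd : f.Odd) (hper : f.Periodic M)
    (hf : ∀ m : ℤ, 0 < m → 2 * m < M → 0 ≤ f m) (n : ℕ) {m : ℤ} (hm : 0 < m) (hmM : m ≤ M) :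
    0 ≤ f m * ((-1) ^ (n + 1) * bernoulliFun (2 * n + 1) (m / M)) := by
  have lower_half {l : ℤ} (hl : 0 < l) (hlM : 2 * l < M) :
      0 ≤ f l * ((-1) ^ (n + 1) * bernoulliFun (2 * n + 1) (l / M)) :=
    mul_nonneg (hf l hl hlM) (neg_one_pow_mul_bernoulliFun_odd_pos n
      (div_mem_Ioo_zero_half (mod_cast hl) (mod_cast hlM))).le
  rcases hmM.eq_or_lt with rfl | hmM
  · have hfM : f M = 0 := by rw [← zero_add (M : ℤ), hper, hodd.map_zero]
    simp [hfM]
  rcases lt_trichotomy (2 * m) M with hlt | heq | hgt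
  · exact lower_half hm hlt
  · have hhalf : (m / M : ℝ) = 2⁻¹ := by
      rw [← Int.cast_natCast, ← heq]
      push_cast
      field_simp
    simp [hhalf, bernoulliFun_eval_half_eq_zero]
  · rw [mul_left_comm, ← bernoulliFun_odd_term_reflect hodd hper (by lia), mul_left_comm]
    exact lower_half (by lia) (by lia)

theorem Cf_zero_pos_of_odd (hodd : f.Odd) (hper : f.Periodic M)
    (hf : ∀ m : ℤ, 0 < m → 2 * m < M → 0 ≤ f m)
    (hf_pos : ∃ m : ℤ, 0 < m ∧ 2 * m < M ∧ 0 < f m) (n : ℕ) : 0 < Cf M f 0 n := by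
  obtain ⟨m, hm, hmM, hfm⟩ := hf_pos
  lift m to ℕ using hm.le
  have hM : 0 < M := by lia
  rw [Cf_zero_eq_sum_bernoulliFun]
  refine mul_pos (by positivity) (Finset.sum_pos' (fun l hl ↦ ?_) ⟨m, ?_, mul_pos hfm ?_⟩)
  · obtain ⟨hl, hlM⟩ := Finset.mem_Icc.1 hl
    exact bernoulliFun_odd_term_nonneg hodd hper hf n (by lia : (0 : ℤ) < l) (by lia)
  · exact Finset.mem_Icc.2 (by lia)
  · exact neg_one_pow_mul_bernoulliFun_odd_pos n
      (div_mem_Ioo_zero_half (mod_cast hm) (mod_cast hmM))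

theorem xif_chiK_pos_general {a b : ℕ} (hb : 0 < b) (hodd : f.Odd) (hper : f.Periodic M)
    (hf : ∀ m : ℤ, 0 < m → 2 * m < M → 0 ≤ f m)
    (hf_pos : ∃ m : ℤ, 0 < m ∧ 2 * m < M ∧ 0 < f m) (n : ℕ) : 0 < xif M f 0 a b n :=
  xif_pos_of_Df_pos (Df_pos_of_Cf_pos hb (Cf_zero_pos_of_odd hodd hper hf hf_pos)) n

end OddPeriodic

theorem not_modEq_neg_of_pos_of_lt {M c d : ℤ} (hpos : 0 < c + d) (hlt : c + d < M) :
    ¬c ≡ -d [ZMOD M] := by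
  intro h
  have hdvd : M ∣ c + d := by simpa using h.symm.dvd
  exact hlt.not_ge (Int.le_of_dvd hpos hdvd)

section ChiK

variable {k : ℕ}

theorem chiK_eq_ite_modEq (k : ℕ) (n : ℤ) : chiK k n =
    if n ≡ k [ZMOD 4 * k + 2] ∨ n ≡ k + 1 [ZMOD 4 * k + 2] then 1
    else if n ≡ -k [ZMOD 4 * k + 2] ∨ n ≡ -(k + 1) [ZMOD 4 * k + 2] then -1
    else 0 := by
  rw [neg_add']
  rfl

theorem chiK_periodic (k : ℕ) : (chiK k).Periodic (4 * k + 2 : ℕ) := fun n ↦ by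
  simp [chiK]

theorem chiK_odd (hk : 1 ≤ k) : (chiK k).Odd := fun n ↦ by
  have hneg (c : ℤ) : -n ≡ c [ZMOD 4 * k + 2] ↔ n ≡ -c [ZMOD 4 * k + 2] := by
    rw [← Int.neg_modEq_neg, neg_neg]
  have hdisj {c d : ℤ} (hpos : 0 < c + d) (hlt : c + d < 4 * k + 2)
      (hc : n ≡ c [ZMOD 4 * k + 2]) : ¬n ≡ -d [ZMOD 4 * k + 2] := fun hd ↦
    not_modEq_neg_of_pos_of_lt hpos hlt (hc.symm.trans hd)
  have hexcl : n ≡ k [ZMOD 4 * k + 2] ∨ n ≡ k + 1 [ZMOD 4 * k + 2] →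
      ¬(n ≡ -k [ZMOD 4 * k + 2] ∨ n ≡ -(k + 1) [ZMOD 4 * k + 2]) := by
    rintro (h | h) (h' | h') <;> exact hdisj (by lia) (by lia) h h'
  simp only [chiK_eq_ite_modEq, hneg, neg_neg]
  split_ifs with hminus hplus
  · exact absurd hminus (hexcl hplus)
  all_goals norm_num

theorem chiK_nonneg {m : ℤ} (hm : 0 < m) (hmk : 2 * m < (4 * k + 2 : ℕ)) : 0 ≤ chiK k m := by
  have hminus : ¬(m ≡ -k [ZMOD 4 * k + 2] ∨ m ≡ -(k + 1) [ZMOD 4 * k + 2]) := by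
    rintro (h | h) <;> exact not_modEq_neg_of_pos_of_lt (by lia) (by lia) h
  rw [chiK_eq_ite_modEq, if_neg hminus]
  split_ifs <;> norm_num

theorem chiK_self (k : ℕ) : chiK k k = 1 := by
  simp [chiK]

end ChiK

/-- The coefficients `ξ_{𝒢_k}(n)` of `𝒢_k(1−q)` (given by the
construction with `f = χ_k`, `M = 4k+2`, `ν = 0`, `a = k²`, `b = 2k+1`) are positive. -/
theorem xif_chiK_pos (k : ℕ) (hk : 1 ≤ k) :
    ∀ n : ℕ, 0 < xif (4 * k + 2) (chiK k) 0 (k ^ 2) (2 * k + 1) n :=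
  xif_chiK_pos_general (by lia) (chiK_odd hk) (chiK_periodic k) (fun _ ↦ chiK_nonneg)
    ⟨k, by lia, by lia, by simp [chiK_self]⟩
end
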